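/- A finite partial order P is a unit interval order if and only if P is (3+1)-free and (2+2)-free; that is, if and only if there do not exist elements a, b, c, d of P with a <_P b <_P c and d incomparable to each of a, b, c, and there do not exist elements a, b, c, d of P with a <_P b, c <_P d, and each of a, b incomparable to each of c, d. -/

import Mathlib

/-- Two elements of a poset are incomparable. -/
def Incomparable {α : Type*} [PartialOrder α] (x y : α) : Prop :=
  x ≠ y ∧ ¬ x ≤ y ∧ ¬ y ≤ x

/-!
Order `P` by its trace: `x` lies below `y` when every element under `x` is under `y` and every
element over `y` is over `x`. Two elements that the trace leaves unrelated produce a copy of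
`3 + 1` or of `2 + 2`, and conversely, so that `P` is free of both exactly when its trace is total.
In a representation by intervals whose two endpoints increase together, the order of the left
endpoints refines the trace, which is therefore total. Conversely, when the trace is total one
places the elements one at a time in increasing trace order: the constraints on the new left
endpoint are finitely many strict lower and upper bounds, and they are compatible as soon as the
earlier endpoints are in general position and strictly increase along the trace.
-/

section Freeness

variable {α : Type*} [PartialOrder α]

lemma incomparable_iff_incompRel {x y : α} : Incomparable x y ↔ IncompRel (· ≤ ·) x y :=
  ⟨And.right, fun h ↦ ⟨fun hxy ↦ h.1 hxy.le, h⟩⟩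

variable (α) in
/-- A poset is (3+1)-free if no chain of three elements has all of its members incomparable to a
fourth element. -/
def ThreePlusOneFree : Prop :=
  ¬ ∃ a b c d : α, a < b ∧ b < c ∧ Incomparable d a ∧ Incomparable d b ∧ Incomparable d c

variable (α) in
/-- A poset is (2+2)-free if no two chains of two elements are completely incomparable to each
other. -/
def TwoPlusTwoFree : Prop :=
  ¬ ∃ a b c d : α, a < b ∧ c < d ∧
    Incomparable a c ∧ Incomparable a d ∧ Incomparable b c ∧ Incomparable b d

lemma threePlusOneFree_iff :
    ThreePlusOneFree α ↔ ∀ ⦃a b c d : α⦄, a < b → b < c → a < d ∨ d < c := by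
  simp only [ThreePlusOneFree, incomparable_iff_incompRel, IncompRel]
  constructor
  · intro hfree a b c d hab hbc
    by_contra! ⟨had, hdc⟩
    refine hfree ⟨a, b, c, d, hab, hbc, ⟨?_, ?_⟩, ⟨?_, ?_⟩, ?_, ?_⟩ <;> order
  · rintro h ⟨a, b, c, d, hab, hbc, hda, -, hdc⟩
    exact (h hab hbc).elim (fun had ↦ hda.2 had.le) (fun hdc' ↦ hdc.1 hdc'.le)

lemma twoPlusTwoFree_iff :
    TwoPlusTwoFree α ↔ ∀ ⦃a b c d : α⦄, a < b → c < d → a < d ∨ c < b := by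
  simp only [TwoPlusTwoFree, incomparable_iff_incompRel, IncompRel]
  constructor
  · intro hfree a b c d hab hcd
    by_contra! ⟨had, hcb⟩
    refine hfree ⟨a, b, c, d, hab, hcd, ⟨?_, ?_⟩, ⟨?_, ?_⟩, ⟨?_, ?_⟩, ?_, ?_⟩ <;> order
  · rintro h ⟨a, b, c, d, hab, hcd, -, had, hbc, -⟩
    exact (h hab hcd).elim (fun had' ↦ had.1 had'.le) (fun hcb ↦ hbc.2 hcb.le)

end Freeness

section Trace

/-- The trace of an element of an order: the sets of elements strictly below and strictly above it.
The second set is taken in the order dual, so that traces grow as elements move up. -/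
def orderTrace {α : Type*} [Preorder α] (x : α) : Set α × (Set α)ᵒᵈ :=
  (Set.Iio x, OrderDual.toDual (Set.Ioi x))

lemma orderTrace_le_iff {α : Type*} [Preorder α] {x y : α} :
    orderTrace x ≤ orderTrace y ↔ (∀ z, z < x → z < y) ∧ ∀ z, y < z → x < z :=
  Iff.rfl

lemma orderTrace_total_iff {α : Type*} [PartialOrder α] :
    (∀ x y : α, orderTrace x ≤ orderTrace y ∨ orderTrace y ≤ orderTrace x) ↔
      ThreePlusOneFree α ∧ TwoPlusTwoFree α := by
  rw [threePlusOneFree_iff, twoPlusTwoFree_iff]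
  simp only [orderTrace_le_iff]
  constructor
  · intro total
    exact ⟨fun a b c d hab hbc ↦ (total b d).imp (fun h ↦ h.1 a hab) (fun h ↦ h.2 c hbc),
      fun a b c d hab hcd ↦ (total b d).imp (fun h ↦ h.1 a hab) (fun h ↦ h.1 c hcd)⟩
  · rintro ⟨three_one, two_two⟩ x y
    by_contra hunrelated
    simp only [not_or, not_and_or, not_forall, exists_prop] at hunrelated
    obtain ⟨⟨z, hzx, hzy⟩ | ⟨z, hyz, hxz⟩, ⟨w, hwy, hwx⟩ | ⟨w, hxw, hyw⟩⟩ := hunrelated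
    · exact (two_two hzx hwy).elim hzy hwx
    · exact (three_one hzx hxw).elim hzy hyw
    · exact (three_one hwy hyz).elim hwx hxz
    · exact (two_two hxw hyz).elim hxz hyw

end Trace

section Representation

variable {α L : Type*} [LinearOrder L] {φ : L → L} {q : α → L}

lemma orderTrace_total_of_intervalRep [Preorder α] (hφ : Monotone φ)
    (hq : ∀ i j : α, i < j ↔ φ (q i) < q j) (x y : α) :
    orderTrace x ≤ orderTrace y ∨ orderTrace y ≤ orderTrace x := by
  have trace_mono {x y : α} (hxy : q x ≤ q y) : orderTrace x ≤ orderTrace y :=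
    ⟨fun z hz ↦ (hq z y).2 (((hq z x).1 hz).trans_le hxy),
      fun z hz ↦ (hq x z).2 ((hφ hxy).trans_lt ((hq y z).1 hz))⟩
  exact (le_total (q x) (q y)).imp trace_mono trace_mono

/-- On the finite set `S`, the order is represented by the intervals `[q x, φ (q x)]`, generically:
no left endpoint is a right endpoint, and left endpoints strictly increase along the trace (when
the trace is total, `¬ orderTrace y ≤ orderTrace x` says that `x` lies strictly below `y`).
Genericity is what allows a representation to be extended to a further element. -/
structure IsGenericIntervalRepOn [Preorder α] (φ : L → L) (q : α → L) (S : Finset α) : Prop where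
  lt_of_lt : ∀ x ∈ S, ∀ y ∈ S, x < y → φ (q x) < q y
  lt_of_not_lt : ∀ x ∈ S, ∀ y ∈ S, ¬ x < y → q y < φ (q x)
  lt_of_not_trace_le : ∀ x ∈ S, ∀ y ∈ S, ¬ orderTrace y ≤ orderTrace x → q x < q y

namespace IsGenericIntervalRepOn

variable [Preorder α] {S : Finset α} {k : α}

lemma congr {q' : α → L} (hq : IsGenericIntervalRepOn φ q S) (h : ∀ x ∈ S, q' x = q x) :
    IsGenericIntervalRepOn φ q' S where
  lt_of_lt x hx y hy := by simpa only [h x hx, h y hy] using hq.lt_of_lt x hx y hy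
  lt_of_not_lt x hx y hy := by simpa only [h x hx, h y hy] using hq.lt_of_not_lt x hx y hy
  lt_of_not_trace_le x hx y hy := by
    simpa only [h x hx, h y hy] using hq.lt_of_not_trace_le x hx y hy

lemma lt_iff (hq : IsGenericIntervalRepOn φ q S) {x y : α} (hx : x ∈ S) (hy : y ∈ S) :
    x < y ↔ φ (q x) < q y :=
  ⟨hq.lt_of_lt x hx y hy, fun h ↦ by_contra fun hxy ↦ h.asymm (hq.lt_of_not_lt x hx y hy hxy)⟩

open scoped Classical in
lemma exists_left_endpoint [DenselyOrdered L] [NoMinOrder L] [NoMaxOrder L] [Nonempty L]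
    (hφ : StrictMono φ) (hq : IsGenericIntervalRepOn φ q S)
    (hk : ∀ x ∈ S, orderTrace x ≤ orderTrace k) :
    ∃ m, (∀ x ∈ S, q x < m) ∧ (∀ x ∈ S, x < k → φ (q x) < m) ∧
      ∀ x ∈ S, ¬ x < k → m < φ (q x) := by
  have lower_lt_upper : ∀ l ∈ S.image q ∪ {x ∈ S | x < k}.image (φ ∘ q),
      ∀ u ∈ {y ∈ S | ¬ y < k}.image (φ ∘ q), l < u := by
    simp only [Finset.forall_mem_union, Finset.forall_mem_image, Finset.mem_filter]
    constructor
    · rintro x hx y ⟨hy, hyk⟩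
      exact hq.lt_of_not_lt y hy x hx fun hyx ↦ hyk ((hk x hx).1 hyx)
    · rintro x ⟨hx, hxk⟩ y ⟨hy, hyk⟩
      exact hφ (hq.lt_of_not_trace_le x hx y hy fun hyx ↦ hyk (hyx.2 hxk))
  obtain ⟨m, lower_lt, lt_upper⟩ := Order.exists_between_finsets _ _ lower_lt_upper
  simp only [Finset.forall_mem_union, Finset.forall_mem_image, Finset.mem_filter, and_imp]
    at lower_lt lt_upper
  exact ⟨m, lower_lt.1, lower_lt.2, lt_upper⟩

lemma insert [DecidableEq α] (hφ : ∀ l, l < φ l) (hq : IsGenericIntervalRepOn φ q S)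
    (hk : ∀ x ∈ S, orderTrace x ≤ orderTrace k) (left_lt : ∀ x ∈ S, q x < q k)
    (right_lt : ∀ x ∈ S, x < k → φ (q x) < q k)
    (lt_right : ∀ x ∈ S, ¬ x < k → q k < φ (q x)) :
    IsGenericIntervalRepOn φ q (insert k S) where
  lt_of_lt := by
    simp only [Finset.forall_mem_insert]
    exact ⟨⟨fun h ↦ (lt_irrefl k h).elim, fun y hy hky ↦ (lt_irrefl y ((hk y hy).2 hky)).elim⟩,
      fun x hx ↦ ⟨right_lt x hx, hq.lt_of_lt x hx⟩⟩
  lt_of_not_lt := by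
    simp only [Finset.forall_mem_insert]
    exact ⟨⟨fun _ ↦ hφ _, fun y hy _ ↦ (left_lt y hy).trans (hφ _)⟩,
      fun x hx ↦ ⟨lt_right x hx, hq.lt_of_not_lt x hx⟩⟩
  lt_of_not_trace_le := by
    simp only [Finset.forall_mem_insert]
    exact ⟨⟨fun h ↦ (h le_rfl).elim, fun y hy h ↦ (h (hk y hy)).elim⟩,
      fun x hx ↦ ⟨fun _ ↦ left_lt x hx, hq.lt_of_not_trace_le x hx⟩⟩

end IsGenericIntervalRepOn

variable [DenselyOrdered L] [NoMinOrder L] [Nonempty L]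

open scoped Classical in
theorem exists_isGenericIntervalRepOn [Preorder α] (hφ : StrictMono φ) (lt_φ : ∀ l, l < φ l)
    (total : ∀ x y : α, orderTrace x ≤ orderTrace y ∨ orderTrace y ≤ orderTrace x)
    (S : Finset α) : ∃ q, IsGenericIntervalRepOn φ q S := by
  have : NoMaxOrder L := ⟨fun l ↦ ⟨φ l, lt_φ l⟩⟩
  induction S using Finset.eraseInduction with
  | _ S ih =>
    obtain rfl | hS := S.eq_empty_or_nonempty
    · exact ⟨fun _ ↦ Classical.arbitrary L, by simp, by simp, by simp⟩
    obtain ⟨k, hkS, hmax⟩ := S.exists_maximalFor orderTrace hS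
    have hk : ∀ x ∈ S.erase k, orderTrace x ≤ orderTrace k := fun x hx ↦
      (total x k).elim id (hmax (Finset.mem_of_mem_erase hx))
    obtain ⟨q, hq⟩ := ih k hkS
    obtain ⟨m, left_lt, right_lt, lt_right⟩ := hq.exists_left_endpoint hφ hk
    have update_eq : ∀ x ∈ S.erase k, Function.update q k m x = q x := fun x hx ↦
      Function.update_of_ne (Finset.ne_of_mem_erase hx) m q
    refine ⟨Function.update q k m, Finset.insert_erase hkS ▸
      (hq.congr update_eq).insert lt_φ hk ?_ ?_ ?_⟩ <;>
      intro x hx <;> rw [update_eq x hx, Function.update_self]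
    exacts [left_lt x hx, right_lt x hx, lt_right x hx]

/-- Since `φ` is strictly increasing, none of the intervals `[l, φ l]` contains another, so this
covers proper interval orders; unit intervals are the case `φ l = l + 1`. -/
theorem unitIntervalOrder_iff_three_plus_one_free_and_two_plus_two_free_general
    [Finite α] [PartialOrder α] (hφ : StrictMono φ) (lt_φ : ∀ l, l < φ l) :
    (∃ q : α → L, ∀ i j : α, i < j ↔ φ (q i) < q j) ↔
      ThreePlusOneFree α ∧ TwoPlusTwoFree α := by
  have := Fintype.ofFinite α
  rw [← orderTrace_total_iff]
  constructor
  · rintro ⟨q, hq⟩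
    exact orderTrace_total_of_intervalRep hφ.monotone hq
  · intro total
    obtain ⟨q, hq⟩ := exists_isGenericIntervalRepOn hφ lt_φ total Finset.univ
    exact ⟨q, fun i j ↦ hq.lt_iff (Finset.mem_univ i) (Finset.mem_univ j)⟩

end Representation

/-- A finite partial order is a unit interval order iff it is (3+1)-free and (2+2)-free. -/
theorem unitIntervalOrder_iff_three_plus_one_free_and_two_plus_two_free
    {α : Type*} [Fintype α] [PartialOrder α] :
    (∃ q : α → ℝ, ∀ i j : α, i < j ↔ q i + 1 < q j) ↔
      ((¬ ∃ a b c d : α, a < b ∧ b < c ∧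
          Incomparable d a ∧ Incomparable d b ∧ Incomparable d c) ∧
       (¬ ∃ a b c d : α, a < b ∧ c < d ∧
          Incomparable a c ∧ Incomparable a d ∧ Incomparable b c ∧ Incomparable b d)) :=
  unitIntervalOrder_iff_three_plus_one_free_and_two_plus_two_free_general
    (φ := (· + 1)) add_left_strictMono lt_add_one
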